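/- If ‖K‖₂ ≤ b_K, then the gradient estimate G = 2 Dᵀ z yᵀ has bounded second moment: E[‖2 Dᵀ z yᵀ‖_F²] ≤ 4 ‖D‖₂² (‖H‖₂ + b_K ‖D‖₂ (‖C‖₂ + 1))² (‖C‖₂ + 1)² (κ_x + 2 Tr V_xx Tr V_vv + κ_v). -/

import Mathlib

open MeasureTheory ProbabilityTheory Matrix

/-- Operator (spectral) norm of a real matrix. -/
noncomputable def opNorm {α β : Type*} [Fintype α] [Fintype β] [DecidableEq β]
    (A : Matrix α β ℝ) : ℝ :=
  ‖LinearMap.toContinuousLinearMap (Matrix.toEuclideanLin A)‖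

/-- Euclidean norm of a plain vector. -/
noncomputable def eNrm {α : Type*} [Fintype α] (u : α → ℝ) : ℝ := ‖WithLp.toLp 2 u‖

theorem eNrm_sq {α : Type*} [Fintype α] (u : α → ℝ) : eNrm u ^ 2 = ∑ i, u i ^ 2 := by
  unfold eNrm
  rw [EuclideanSpace.norm_sq_eq]
  simp

theorem eNrm_nonneg {α : Type*} [Fintype α] (u : α → ℝ) : 0 ≤ eNrm u := norm_nonneg _

theorem eNrm_add {α : Type*} [Fintype α] (u w : α → ℝ) : eNrm (u + w) ≤ eNrm u + eNrm w := by
  unfold eNrm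
  rw [WithLp.toLp_add]
  exact norm_add_le _ _

theorem opNorm_nonneg' {α β : Type*} [Fintype α] [Fintype β] [DecidableEq β]
    (A : Matrix α β ℝ) : 0 ≤ opNorm A := norm_nonneg _

theorem eNrm_mulVec {α β : Type*} [Fintype α] [Fintype β] [DecidableEq β]
    (A : Matrix α β ℝ) (u : β → ℝ) : eNrm (A.mulVec u) ≤ opNorm A * eNrm u := by
  exact (LinearMap.toContinuousLinearMap (Matrix.toEuclideanLin A)).le_opNorm (WithLp.toLp 2 u)

theorem dot_le_eNrm {α : Type*} [Fintype α] (u w : α → ℝ) : u ⬝ᵥ w ≤ eNrm u * eNrm w := by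
  have h := Finset.sum_mul_sq_le_sq_mul_sq Finset.univ u w
  rw [← eNrm_sq, ← eNrm_sq, ← mul_pow] at h
  exact (le_abs_self _).trans (abs_le_of_sq_le_sq h (mul_nonneg (eNrm_nonneg _) (eNrm_nonneg _)))

theorem eNrm_transpose_mulVec {α β : Type*} [Fintype α] [Fintype β] [DecidableEq β]
    (A : Matrix α β ℝ) (u : α → ℝ) : eNrm (Aᵀ.mulVec u) ≤ opNorm A * eNrm u := by
  have h1 : eNrm (Aᵀ.mulVec u) ^ 2 = u ⬝ᵥ A.mulVec (Aᵀ.mulVec u) := by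
    rw [eNrm_sq, Matrix.dotProduct_mulVec, ← Matrix.mulVec_transpose]
    simp [dotProduct, sq]
  have h2 := dot_le_eNrm u (A.mulVec (Aᵀ.mulVec u))
  have h3 := eNrm_mulVec A (Aᵀ.mulVec u)
  have h4 := eNrm_nonneg u
  have h5 := eNrm_nonneg (Aᵀ.mulVec u)
  have h6 := opNorm_nonneg' A
  by_contra! hc
  have h7 : 0 < eNrm (Aᵀ.mulVec u) := lt_of_le_of_lt (by positivity) hc
  have h8 := mul_le_mul_of_nonneg_left h3 h4
  nlinarith [mul_lt_mul_of_pos_right hc h7]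

theorem pointwise_bound (n p l m : ℕ)
    (H : Matrix (Fin l) (Fin n) ℝ) (D : Matrix (Fin l) (Fin m) ℝ)
    (C : Matrix (Fin p) (Fin n) ℝ) (bK : ℝ) (hbK : 0 < bK)
    (K : Matrix (Fin m) (Fin p) ℝ) (hK : opNorm K ≤ bK) (x : Fin n → ℝ) (v : Fin p → ℝ) :
    (∑ a, ∑ b,
        (2 * (Dᵀ.mulVec (H.mulVec x
              + D.mulVec (K.mulVec (C.mulVec x + v)))) a
           * (C.mulVec x + v) b) ^ 2)
      ≤ 4 * (opNorm D) ^ 2 * (opNorm H + bK * opNorm D * (opNorm C + 1)) ^ 2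
          * (opNorm C + 1) ^ 2 * ((∑ i, x i ^ 2) + ∑ i, v i ^ 2) ^ 2 := by
  set y := C.mulVec x + v with hy
  set z := H.mulVec x + D.mulVec (K.mulVec y) with hz
  have e : (∑ a, ∑ b, (2 * (Dᵀ.mulVec z) a * y b) ^ 2)
      = 4 * eNrm (Dᵀ.mulVec z) ^ 2 * eNrm y ^ 2 := by
    rw [eNrm_sq, eNrm_sq, mul_assoc, Finset.sum_mul_sum, Finset.mul_sum]
    refine Finset.sum_congr rfl fun a _ => ?_
    rw [Finset.mul_sum]
    refine Finset.sum_congr rfl fun b _ => ?_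
    ring
  rw [e, ← eNrm_sq, ← eNrm_sq]
  have hH := opNorm_nonneg' H
  have hD := opNorm_nonneg' D
  have hC := opNorm_nonneg' C
  set r := Real.sqrt (eNrm x ^ 2 + eNrm v ^ 2) with hr
  have hr0 : 0 ≤ r := Real.sqrt_nonneg _
  have hr2 : r ^ 2 = eNrm x ^ 2 + eNrm v ^ 2 := Real.sq_sqrt (by positivity)
  have hx : eNrm x ≤ r := Real.le_sqrt_of_sq_le (by nlinarith [sq_nonneg (eNrm v)])
  have hv : eNrm v ≤ r := Real.le_sqrt_of_sq_le (by nlinarith [sq_nonneg (eNrm x)])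
  have hyr : eNrm y ≤ (opNorm C + 1) * r := by
    have h1 := eNrm_add (C.mulVec x) v
    have h2 := eNrm_mulVec C x
    have h3 := mul_le_mul_of_nonneg_left hx hC
    rw [← hy] at h1
    linarith
  have hzr : eNrm z ≤ (opNorm H + bK * opNorm D * (opNorm C + 1)) * r := by
    have h1 := eNrm_add (H.mulVec x) (D.mulVec (K.mulVec y))
    have h2 := eNrm_mulVec H x
    have h3 := mul_le_mul_of_nonneg_left hx hH
    have h4 := eNrm_mulVec D (K.mulVec y)
    have h5 := eNrm_mulVec K y
    have h6 : opNorm K * eNrm y ≤ bK * ((opNorm C + 1) * r) :=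
      mul_le_mul hK hyr (eNrm_nonneg _) hbK.le
    have h7 := mul_le_mul_of_nonneg_left (h5.trans h6) hD
    rw [← hz] at h1
    linarith
  have hg := (eNrm_transpose_mulVec D z).trans (mul_le_mul_of_nonneg_left hzr hD)
  have hg2 := pow_le_pow_left₀ (eNrm_nonneg _) hg 2
  have hy2 := pow_le_pow_left₀ (eNrm_nonneg _) hyr 2
  have hm := mul_le_mul hg2 hy2 (by positivity) (by positivity)
  rw [← hr2]
  linarith

/-- If `‖K‖₂ ≤ b_K`, then the gradient estimate `G = 2 Dᵀ z yᵀ` has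
bounded second moment:
`E[‖2 Dᵀ z yᵀ‖_F²] ≤ 4‖D‖₂²(‖H‖₂ + b_K‖D‖₂(‖C‖₂+1))²(‖C‖₂+1)²(κ_x + 2 Tr V_xx Tr V_vv + κ_v)`. -/
theorem stmt_7
    {Ω : Type*} [MeasurableSpace Ω] (μ : Measure Ω) [IsProbabilityMeasure μ]
    (n p l m : ℕ) (hn : 0 < n) (hp : 0 < p) (hl : 0 < l) (hm : 0 < m)
    (H : Matrix (Fin l) (Fin n) ℝ) (D : Matrix (Fin l) (Fin m) ℝ)
    (C : Matrix (Fin p) (Fin n) ℝ) (bK : ℝ) (hbK : 0 < bK)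
    (x : Ω → Fin n → ℝ) (v : Ω → Fin p → ℝ)
    (hxmeas : Measurable x) (hvmeas : Measurable v)
    (hindep : IndepFun x v μ)
    (hxmean : ∀ i, ∫ ω, x ω i ∂μ = 0) (hvmean : ∀ i, ∫ ω, v ω i ∂μ = 0)
    (Vxx : Matrix (Fin n) (Fin n) ℝ) (Vvv : Matrix (Fin p) (Fin p) ℝ)
    (hVxxInt : ∀ i j, Integrable (fun ω => x ω i * x ω j) μ)
    (hVxx : ∀ i j, ∫ ω, x ω i * x ω j ∂μ = Vxx i j)
    (hVvvInt : ∀ i j, Integrable (fun ω => v ω i * v ω j) μ)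
    (hVvv : ∀ i j, ∫ ω, v ω i * v ω j ∂μ = Vvv i j)
    (κx κv : ℝ)
    (hx4Int : Integrable (fun ω => (∑ i, (x ω i) ^ 2) ^ 2) μ)
    (hx4 : ∫ ω, (∑ i, (x ω i) ^ 2) ^ 2 ∂μ ≤ κx)
    (hv4Int : Integrable (fun ω => (∑ i, (v ω i) ^ 2) ^ 2) μ)
    (hv4 : ∫ ω, (∑ i, (v ω i) ^ 2) ^ 2 ∂μ ≤ κv)
    (K : Matrix (Fin m) (Fin p) ℝ) (hK : opNorm K ≤ bK) :
    (∫ ω, ∑ a, ∑ b,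
        (2 * (Dᵀ.mulVec (H.mulVec (x ω)
              + D.mulVec (K.mulVec (C.mulVec (x ω) + v ω)))) a
           * (C.mulVec (x ω) + v ω) b) ^ 2 ∂μ)
      ≤ 4 * (opNorm D) ^ 2 * (opNorm H + bK * opNorm D * (opNorm C + 1)) ^ 2
          * (opNorm C + 1) ^ 2 * (κx + 2 * Vxx.trace * Vvv.trace + κv) := by
  have hindep2 : IndepFun (fun ω => ∑ i, x ω i ^ 2) (fun ω => ∑ i, v ω i ^ 2) μ :=
    hindep.comp (φ := fun u : Fin n → ℝ => ∑ i, u i ^ 2)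
      (ψ := fun u : Fin p → ℝ => ∑ i, u i ^ 2) (by fun_prop) (by fun_prop)
  have hXi : Integrable (fun ω => ∑ i, x ω i ^ 2) μ :=
    integrable_finsetSum _ fun i _ => by simpa [sq] using hVxxInt i i
  have hVi : Integrable (fun ω => ∑ i, v ω i ^ 2) μ :=
    integrable_finsetSum _ fun i _ => by simpa [sq] using hVvvInt i i
  have hX : ∫ ω, ∑ i, x ω i ^ 2 ∂μ = Vxx.trace := by
    rw [integral_finsetSum _ fun i _ => by simpa [sq] using hVxxInt i i]
    simp [Matrix.trace, sq, hVxx]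
  have hV : ∫ ω, ∑ i, v ω i ^ 2 ∂μ = Vvv.trace := by
    rw [integral_finsetSum _ fun i _ => by simpa [sq] using hVvvInt i i]
    simp [Matrix.trace, sq, hVvv]
  have hXVi : Integrable (fun ω => (∑ i, x ω i ^ 2) * ∑ i, v ω i ^ 2) μ :=
    hindep2.integrable_mul hXi hVi
  have hXV : ∫ ω, (∑ i, x ω i ^ 2) * ∑ i, v ω i ^ 2 ∂μ = Vxx.trace * Vvv.trace := by
    rw [← hX, ← hV]
    exact hindep2.integral_fun_mul_eq_mul_integral hXi.1 hVi.1
  have hexp : (fun ω => ((∑ i, x ω i ^ 2) + ∑ i, v ω i ^ 2) ^ 2)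
      = fun ω => ((∑ i, x ω i ^ 2) ^ 2 + 2 * ((∑ i, x ω i ^ 2) * ∑ i, v ω i ^ 2))
          + (∑ i, v ω i ^ 2) ^ 2 := by
    funext ω
    ring
  have hRi : Integrable (fun ω => ((∑ i, x ω i ^ 2) + ∑ i, v ω i ^ 2) ^ 2) μ := by
    rw [hexp]
    exact (hx4Int.add (hXVi.const_mul 2)).add hv4Int
  have hR : ∫ ω, ((∑ i, x ω i ^ 2) + ∑ i, v ω i ^ 2) ^ 2 ∂μ
      ≤ κx + 2 * Vxx.trace * Vvv.trace + κv := by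
    have hS : Integrable (fun ω => (∑ i, x ω i ^ 2) ^ 2
        + 2 * ((∑ i, x ω i ^ 2) * ∑ i, v ω i ^ 2)) μ := hx4Int.add (hXVi.const_mul 2)
    rw [hexp, integral_add hS hv4Int,
      integral_add hx4Int (hXVi.const_mul 2), integral_const_mul, hXV]
    linarith
  refine (integral_mono_of_nonneg (Filter.Eventually.of_forall fun ω => ?_)
    (hRi.const_mul (4 * (opNorm D) ^ 2 * (opNorm H + bK * opNorm D * (opNorm C + 1)) ^ 2
          * (opNorm C + 1) ^ 2)) (Filter.Eventually.of_forall fun ω =>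
      pointwise_bound n p l m H D C bK hbK K hK (x ω) (v ω))).trans ?_
  · exact Finset.sum_nonneg fun a _ => Finset.sum_nonneg fun b _ => sq_nonneg _
  · rw [integral_const_mul]
    exact mul_le_mul_of_nonneg_left hR (by positivity)
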